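/- Let Λ be an artin algebra, T a tilting Λ-module, and M ∈ T^⊥. Then there exists, for every n ≥ 1, an exact sequence 0 → K_{n-1} → T_{n-1} → ⋯ → T_1 → T_0 → M → 0 with each T_i ∈ Add T and each kernel K_i = Ker(T_i → T_{i-1}) lying in T^⊥. -/

import Mathlib

open CategoryTheory

universe u

/-- The `n`-th Ext group of `A`-modules `M`, `N`. -/
noncomputable abbrev ext {A : Type u} [Ring A] (M N : ModuleCat.{u} A) (n : ℕ) : Type u :=
  ((Ext ℤ (ModuleCat.{u} A) n).obj (Opposite.op M)).obj N

/-- `Ext^i(N, M) = 0` for all `i > 0`. -/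
def ExtVanish {A : Type u} [Ring A] (N M : ModuleCat.{u} A) : Prop :=
  ∀ i, 0 < i → Subsingleton (ext N M i)

/-- `M` has projective dimension at most `n`, i.e. `Ext^i(M, -) = 0` for `i > n`. -/
def pdLE {A : Type u} [Ring A] (M : ModuleCat.{u} A) (n : ℕ) : Prop :=
  ∀ i, n < i → ∀ N : ModuleCat.{u} A, Subsingleton (ext M N i)

/-- The projective dimension of `M`, as an element of `ℕ∞` (`⊤` if infinite). -/
noncomputable def projDim {A : Type u} [Ring A] (M : ModuleCat.{u} A) : ℕ∞ :=
  sInf {d : ℕ∞ | ∃ n : ℕ, d = n ∧ pdLE M n}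

/-- Membership in `𝒫`: finitely generated of finite projective dimension. -/
def InP {A : Type u} [Ring A] (M : ModuleCat.{u} A) : Prop :=
  Module.Finite A M ∧ ∃ n, pdLE M n

/-- The finitistic dimension of `A`. -/
noncomputable def findim (A : Type u) [Ring A] : ℕ∞ :=
  sSup {d : ℕ∞ | ∃ M : ModuleCat.{u} A, InP M ∧ d = projDim M}

/-- `M` is a direct summand of `S`. -/
def IsSummand {A : Type u} [Ring A] (M S : ModuleCat.{u} A) : Prop :=
  ∃ (s : M →ₗ[A] S) (r : S →ₗ[A] M), r ∘ₗ s = LinearMap.id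

/-- `M` belongs to `add 𝒳`: `M` is a direct summand of a finite direct sum of objects of `𝒳`. -/
def InAddOf {A : Type u} [Ring A] (X : ModuleCat.{u} A → Prop) (M : ModuleCat.{u} A) : Prop :=
  ∃ (k : ℕ) (F : Fin k → ModuleCat.{u} A), (∀ i, X (F i)) ∧
    IsSummand M (ModuleCat.of A (DirectSum (Fin k) (fun i => ↥(F i))))

/-- `M` belongs to `Add T`: `M` is a direct summand of an arbitrary direct sum of copies of `T`. -/
def InAdd {A : Type u} [Ring A] (T M : ModuleCat.{u} A) : Prop :=
  ∃ ι : Type u, IsSummand M (ModuleCat.of A (DirectSum ι (fun _ => ↥T)))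

/-- `M ∈ 𝒳^⊥`: `Ext^i(N, M) = 0` for all `N ∈ 𝒳` and `i > 0`. -/
def InPerpOf {A : Type u} [Ring A] (X : ModuleCat.{u} A → Prop) (M : ModuleCat.{u} A) : Prop :=
  ∀ N, X N → ExtVanish N M

/-- `M` is Ext-injective in `𝒫`: `M ∈ 𝒫` and `Ext^1(N, M) = 0` for all `N ∈ 𝒫`. -/
def ExtInjInP {A : Type u} [Ring A] (M : ModuleCat.{u} A) : Prop :=
  InP M ∧ ∀ N : ModuleCat.{u} A, InP N → Subsingleton (ext N M 1)

/-- `M` is splitting injective in `𝒳`: every injective map `M → Y` with `Y ∈ add 𝒳` splits. -/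
def SplittingInjIn {A : Type u} [Ring A] (X : ModuleCat.{u} A → Prop)
    (M : ModuleCat.{u} A) : Prop :=
  ∀ Y : ModuleCat.{u} A, InAddOf X Y → ∀ f : M →ₗ[A] Y, Function.Injective f →
    ∃ r : Y →ₗ[A] M, r ∘ₗ f = LinearMap.id

/-- `0 → M₁ → M₂ → M₃ → 0` is a short exact sequence. -/
def ShortExact {A : Type u} [Ring A] {M₁ M₂ M₃ : ModuleCat.{u} A}
    (f : M₁ →ₗ[A] M₂) (g : M₂ →ₗ[A] M₃) : Prop :=
  Function.Injective f ∧ Function.Exact f g ∧ Function.Surjective g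

/-- `f : XM → M` is a right `𝒳`-approximation of `M`. -/
def IsRightApprox {A : Type u} [Ring A] (X : ModuleCat.{u} A → Prop)
    {XM M : ModuleCat.{u} A} (f : XM →ₗ[A] M) : Prop :=
  X XM ∧ ∀ Y : ModuleCat.{u} A, X Y → ∀ g : Y →ₗ[A] M, ∃ h : Y →ₗ[A] XM, f ∘ₗ h = g

/-- `f : XM → M` is a minimal right `𝒳`-approximation. -/
def IsMinimalRightApprox {A : Type u} [Ring A] (X : ModuleCat.{u} A → Prop)
    {XM M : ModuleCat.{u} A} (f : XM →ₗ[A] M) : Prop :=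
  IsRightApprox X f ∧ ∀ g : XM →ₗ[A] XM, f ∘ₗ g = f → Function.Bijective g

/-- `𝒳` is contravariantly finite in `mod A`. -/
def ContravariantlyFinite {A : Type u} [Ring A] (X : ModuleCat.{u} A → Prop) : Prop :=
  ∀ M : ModuleCat.{u} A, Module.Finite A M →
    ∃ (XM : ModuleCat.{u} A) (f : XM →ₗ[A] M), IsRightApprox X f

/-- `M` is an indecomposable module: nonzero, and its only idempotent endomorphisms
are `0` and the identity. -/
def Indec {A : Type u} [Ring A] (M : ModuleCat.{u} A) : Prop :=
  (¬ Subsingleton M) ∧ ∀ e : M →ₗ[A] M, e ∘ₗ e = e → e = 0 ∨ e = LinearMap.id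

/-- `L` admits a finite coresolution `0 → L → C^0 → ⋯ → C^n → 0` with all `C^i ∈ add T`. -/
def HasAddCoresolution {A : Type u} [Ring A] (T L : ModuleCat.{u} A) : Prop :=
  ∃ (C : ℕ → ModuleCat.{u} A) (d : ∀ i, C i →ₗ[A] C (i+1)) (f : L →ₗ[A] C 0),
    Function.Injective f ∧ Function.Exact f (d 0) ∧
    (∀ i, Function.Exact (d i) (d (i+1))) ∧
    (∀ i, InAddOf (fun X => X = T) (C i)) ∧
    (∃ m, ∀ i, m ≤ i → Subsingleton (C i))

/-- `T` is a tilting `A`-module. -/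
def IsTilting {A : Type u} [Ring A] (T : ModuleCat.{u} A) : Prop :=
  Module.Finite A T ∧ (∃ n, pdLE T n) ∧ ExtVanish T T ∧
    HasAddCoresolution T (ModuleCat.of A A)

/-- `𝒳` is a resolving subcategory of `mod A`. -/
def Resolving {A : Type u} [Ring A] (X : ModuleCat.{u} A → Prop) : Prop :=
  (∀ M : ModuleCat.{u} A, Module.Finite A M → Module.Projective A M → X M) ∧
  (∀ (M₁ M₂ M₃ : ModuleCat.{u} A) (f : M₁ →ₗ[A] M₂) (g : M₂ →ₗ[A] M₃),
      ShortExact f g → X M₁ → X M₃ → X M₂) ∧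
  (∀ (M₁ M₂ M₃ : ModuleCat.{u} A) (f : M₁ →ₗ[A] M₂) (g : M₂ →ₗ[A] M₃),
      ShortExact f g → X M₂ → X M₃ → X M₁)

/-- `F` is a complete irredundant family of representatives of the isomorphism classes of
indecomposable Ext-injective modules in `𝒫`. -/
def IsCompleteExtInjFamily {A : Type u} [Ring A] {ι : Type u}
    (F : ι → ModuleCat.{u} A) : Prop :=
  (∀ i, Indec (F i) ∧ ExtInjInP (F i)) ∧
  (∀ M : ModuleCat.{u} A, Indec M → ExtInjInP M → ∃ i, Nonempty (M ≃ₗ[A] F i)) ∧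
  (∀ i j, Nonempty (F i ≃ₗ[A] F j) → i = j)

/-- `I` is a complete set of pairwise non-isomorphic indecomposable injective modules. -/
def IsCompleteIndecInjFamily {A : Type u} [Ring A] {n : ℕ}
    (I : Fin n → ModuleCat.{u} A) : Prop :=
  (∀ j, Module.Finite A (I j) ∧ Module.Injective A (I j) ∧ Indec (I j)) ∧
  (∀ M : ModuleCat.{u} A, Module.Finite A M → Module.Injective A M → Indec M →
      ∃ j, Nonempty (M ≃ₗ[A] I j)) ∧
  (∀ j k, Nonempty (I j ≃ₗ[A] I k) → j = k)

/-!
Let `p : T^(Hom(T, M)) → M` be the evaluation map, which is a right `Add T`-approximation of `M`.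
Extending a map `A → M` along the coresolution `0 → A → C⁰ → ⋯` of the regular module is
unobstructed, because all its cosyzygies are Ext-orthogonal to `M`; so every element of `M` is in
the image of a map `C⁰ → M`, hence in that of `p`. The kernel of the epimorphism `p` is again in
`T^⊥`: maps `T → M` lift along `p`, which handles `Ext¹`, and the higher degrees need only that
`T^⊥` contains the direct sums of copies of `T`. That is where finite generation of `T` over a
noetherian ring enters, by dimension shifting. Now iterate.
-/

universe w v

section AbelianCategory

variable {C : Type*} [Category.{v} C] [Abelian C]

lemma subsingleton_ext_succ_iff_forall_exists {k : Type*} [Ring k] [Linear k C]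
    [EnoughProjectives C] {X : C} (P : ProjectiveResolution X) (Y : C) (n : ℕ) :
    Subsingleton (((Ext k C (n + 1)).obj (Opposite.op X)).obj Y) ↔
      ∀ f : P.complex.X (n + 1) ⟶ Y, P.complex.d (n + 2) (n + 1) ≫ f = 0 →
        ∃ g : P.complex.X n ⟶ Y, P.complex.d (n + 1) n ≫ g = f := by
  rw [((P.isoExt (R := k) (n + 1) Y).toLinearEquiv).toEquiv.subsingleton_congr,
    ← ModuleCat.isZero_iff_subsingleton, ← HomologicalComplex.exactAt_iff_isZero_homology,
    HomologicalComplex.exactAt_iff' _ n (n + 1) (n + 2) (by simp) (by simp),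
    ShortComplex.moduleCat_exact_iff]
  rfl

variable [HasExt.{w} C]

lemma subsingleton_abelianExt_succ_iff_forall_exists {X : C} (P : ProjectiveResolution X) (Y : C)
    (n : ℕ) :
    Subsingleton (Abelian.Ext.{w} X Y (n + 1)) ↔
      ∀ f : P.complex.X (n + 1) ⟶ Y, P.complex.d (n + 2) (n + 1) ≫ f = 0 →
        ∃ g : P.complex.X n ⟶ Y, P.complex.d (n + 1) n ≫ g = f := by
  refine ⟨fun _ f hf => (P.extMk_eq_zero_iff f _ rfl hf n rfl).1 (Subsingleton.elim _ _),
    fun h => subsingleton_of_forall_eq 0 fun α => ?_⟩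
  obtain ⟨f, hf, rfl⟩ := P.extMk_surjective α (n + 2) rfl
  exact (P.extMk_eq_zero_iff f _ rfl hf n rfl).2 (h f hf)

lemma subsingleton_abelianExt_of_retract {X X' Y : C} {n : ℕ} (r : Retract X X')
    [Subsingleton (Abelian.Ext.{w} X' Y n)] : Subsingleton (Abelian.Ext.{w} X Y n) := by
  refine subsingleton_of_forall_eq 0 fun x => ?_
  rw [← Abelian.Ext.mk₀_id_comp x, ← r.retract, ← Abelian.Ext.mk₀_comp_mk₀_assoc,
    Subsingleton.elim ((Abelian.Ext.mk₀ r.r).comp x _) 0, Abelian.Ext.comp_zero]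

section ShortExact

variable {S : ShortComplex C} (hS : S.ShortExact)
include hS

lemma subsingleton_abelianExt_from_X₁_of_X₂_of_X₃ {Y : C} {n : ℕ}
    [Subsingleton (Abelian.Ext.{w} S.X₂ Y n)] [Subsingleton (Abelian.Ext.{w} S.X₃ Y (n + 1))] :
    Subsingleton (Abelian.Ext.{w} S.X₁ Y n) := by
  refine subsingleton_of_forall_eq 0 fun x => ?_
  obtain ⟨y, rfl⟩ := Abelian.Ext.contravariant_sequence_exact₁ hS Y x (add_comm 1 n)
    (Subsingleton.elim _ _)
  rw [Subsingleton.elim y 0, Abelian.Ext.comp_zero]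

lemma subsingleton_abelianExt_from_X₃_of_X₁_of_X₂ {Y : C} {n : ℕ}
    [Subsingleton (Abelian.Ext.{w} S.X₁ Y n)] [Subsingleton (Abelian.Ext.{w} S.X₂ Y (n + 1))] :
    Subsingleton (Abelian.Ext.{w} S.X₃ Y (n + 1)) := by
  refine subsingleton_of_forall_eq 0 fun x => ?_
  obtain ⟨y, rfl⟩ := Abelian.Ext.contravariant_sequence_exact₃ hS Y x (Subsingleton.elim _ _)
    (add_comm 1 n)
  rw [Subsingleton.elim y 0, Abelian.Ext.comp_zero]

lemma exists_f_comp_eq_of_subsingleton_abelianExt {Y : C} [Subsingleton (Abelian.Ext.{w} S.X₃ Y 1)]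
    (φ : S.X₁ ⟶ Y) : ∃ ψ : S.X₂ ⟶ Y, S.f ≫ ψ = φ := by
  obtain ⟨y, hy⟩ := Abelian.Ext.contravariant_sequence_exact₁ hS Y (Abelian.Ext.mk₀.{w} φ)
    (add_comm 1 0) (Subsingleton.elim _ _)
  obtain ⟨ψ, rfl⟩ := (Abelian.Ext.mk₀_bijective _ _).2 y
  rw [Abelian.Ext.mk₀_comp_mk₀] at hy
  exact ⟨ψ, (Abelian.Ext.mk₀_bijective _ _).1 hy⟩

lemma subsingleton_abelianExt_one_from_X₃_iff_of_projective [Projective S.X₂] (Y : C) :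
    Subsingleton (Abelian.Ext.{w} S.X₃ Y 1) ↔ ∀ φ : S.X₁ ⟶ Y, ∃ ψ : S.X₂ ⟶ Y, S.f ≫ ψ = φ := by
  refine ⟨fun _ => exists_f_comp_eq_of_subsingleton_abelianExt hS,
    fun h => subsingleton_of_forall_eq 0 fun x => ?_⟩
  obtain ⟨y, rfl⟩ := Abelian.Ext.contravariant_sequence_exact₃ hS Y x
    (Abelian.Ext.eq_zero_of_projective _) (add_comm 1 0)
  obtain ⟨φ, rfl⟩ := (Abelian.Ext.mk₀_bijective _ _).2 y
  obtain ⟨ψ, rfl⟩ := h φ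
  rw [← Abelian.Ext.mk₀_comp_mk₀, hS.extClass_comp_assoc]

lemma subsingleton_abelianExt_from_X₁_iff_from_X₃_of_projective [Projective S.X₂] (Y : C) (n : ℕ) :
    Subsingleton (Abelian.Ext.{w} S.X₁ Y (n + 1)) ↔
      Subsingleton (Abelian.Ext.{w} S.X₃ Y (n + 2)) :=
  have (m : ℕ) := Abelian.Ext.subsingleton_of_projective.{w} S.X₂ Y m
  ⟨fun _ => subsingleton_abelianExt_from_X₃_of_X₁_of_X₂ hS,
    fun _ => subsingleton_abelianExt_from_X₁_of_X₂_of_X₃ hS⟩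

lemma subsingleton_abelianExt_to_X₁_of_X₂_of_X₃ {X : C} {n : ℕ}
    [Subsingleton (Abelian.Ext.{w} X S.X₂ (n + 1))] [Subsingleton (Abelian.Ext.{w} X S.X₃ n)] :
    Subsingleton (Abelian.Ext.{w} X S.X₁ (n + 1)) := by
  refine subsingleton_of_forall_eq 0 fun x => ?_
  obtain ⟨y, rfl⟩ := Abelian.Ext.covariant_sequence_exact₁ X hS x (Subsingleton.elim _ _) rfl
  rw [Subsingleton.elim y 0, Abelian.Ext.zero_comp]

lemma subsingleton_abelianExt_one_to_X₁_of_lift {X : C} [Subsingleton (Abelian.Ext.{w} X S.X₂ 1)]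
    (hlift : ∀ φ : X ⟶ S.X₃, ∃ ψ : X ⟶ S.X₂, ψ ≫ S.g = φ) :
    Subsingleton (Abelian.Ext.{w} X S.X₁ 1) := by
  refine subsingleton_of_forall_eq 0 fun x => ?_
  obtain ⟨y, rfl⟩ := Abelian.Ext.covariant_sequence_exact₁ X hS x (Subsingleton.elim _ _)
    (zero_add 1)
  obtain ⟨φ, rfl⟩ := (Abelian.Ext.mk₀_bijective _ _).2 y
  obtain ⟨ψ, rfl⟩ := hlift φ
  rw [← Abelian.Ext.mk₀_comp_mk₀_assoc, hS.comp_extClass, Abelian.Ext.comp_zero]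

end ShortExact

end AbelianCategory

section LinearAlgebra

variable {A : Type*} [Ring A] {N P : Type*} [AddCommGroup N] [Module A N] [AddCommGroup P]
  [Module A P] {ι : Type*} {Y : ι → Type*} [∀ j, AddCommGroup (Y j)] [∀ j, Module A (Y j)]

lemma exists_finset_component_comp_eq_zero [Module.Finite A N] (f : N →ₗ[A] DirectSum ι Y) :
    ∃ s : Finset ι, ∀ j ∉ s, DirectSum.component A ι Y j ∘ₗ f = 0 := by
  classical
  obtain ⟨S, hS⟩ := Module.Finite.fg_top (R := A) (M := N)
  refine ⟨S.biUnion fun x => (f x).support, fun j hj => LinearMap.ext_on hS fun x hx => ?_⟩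
  by_contra h
  exact hj (Finset.mem_biUnion.2 ⟨x, hx, DFinsupp.mem_support_iff.2 h⟩)

lemma exists_comp_eq_of_forall_component [Module.Finite A N] (i : N →ₗ[A] P)
    (f : N →ₗ[A] DirectSum ι Y)
    (h : ∀ j, ∃ g : P →ₗ[A] Y j, g ∘ₗ i = DirectSum.component A ι Y j ∘ₗ f) :
    ∃ g : P →ₗ[A] DirectSum ι Y, g ∘ₗ i = f := by
  classical
  obtain ⟨s, hs⟩ := exists_finset_component_comp_eq_zero f
  choose g hg using h
  refine ⟨DirectSum.lmk A ι Y s ∘ₗ LinearMap.pi fun j => g j, LinearMap.ext fun x => ?_⟩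
  refine DFinsupp.ext fun j => (DFinsupp.mk_apply ..).trans ?_
  split_ifs with hj
  · exact LinearMap.congr_fun (hg j) x
  · exact (LinearMap.congr_fun (hs j hj) x).symm

end LinearAlgebra

section Modules

variable {A : Type u} [Ring A]

lemma extVanish_iff {N M : ModuleCat.{u} A} :
    ExtVanish N M ↔ ∀ n, Subsingleton (Abelian.Ext.{u} N M (n + 1)) := by
  have h (n : ℕ) :
      Subsingleton (ext N M (n + 1)) ↔ Subsingleton (Abelian.Ext.{u} N M (n + 1)) :=
    (subsingleton_ext_succ_iff_forall_exists (ProjectiveResolution.of N) M n).trans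
      (subsingleton_abelianExt_succ_iff_forall_exists (ProjectiveResolution.of N) M n).symm
  simp_rw [← h]
  exact ⟨fun hNM n => hNM _ n.succ_pos, fun hNM => Nat.rec (by simp) fun n _ _ => hNM n⟩

lemma subsingleton_abelianExt_directSum [IsNoetherianRing A] {N : ModuleCat.{u} A}
    [Module.Finite A N] {ι : Type u} {Y : ι → ModuleCat.{u} A} {n : ℕ}
    (h : ∀ j, Subsingleton (Abelian.Ext.{u} N (Y j) (n + 1))) :
    Subsingleton (Abelian.Ext.{u} N (ModuleCat.of A (DirectSum ι fun j => Y j)) (n + 1)) := by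
  induction n generalizing N with
  | zero =>
    obtain ⟨k, e, he⟩ := Module.Finite.exists_fin' A N
    have hS := LinearMap.shortExact_shortComplexKer he
    rw [subsingleton_abelianExt_one_from_X₃_iff_of_projective hS]
    intro f
    obtain ⟨g, hg⟩ := exists_comp_eq_of_forall_component (LinearMap.ker e).subtype f.hom fun j => by
      have := h j
      obtain ⟨g, hg⟩ := exists_f_comp_eq_of_subsingleton_abelianExt hS
        (f ≫ ModuleCat.ofHom (DirectSum.component A ι _ j))
      exact ⟨g.hom, congrArg ModuleCat.Hom.hom hg⟩
    exact ⟨ModuleCat.ofHom g, ModuleCat.hom_ext hg⟩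
  | succ n ih =>
    obtain ⟨k, e, he⟩ := Module.Finite.exists_fin' A N
    have hS := LinearMap.shortExact_shortComplexKer he
    rw [← subsingleton_abelianExt_from_X₁_iff_from_X₃_of_projective hS]
    exact ih fun j => (subsingleton_abelianExt_from_X₁_iff_from_X₃_of_projective hS _ _).2 (h j)

lemma ExtVanish.directSum_right [IsNoetherianRing A] {N : ModuleCat.{u} A} [Module.Finite A N]
    {ι : Type u} {Y : ι → ModuleCat.{u} A} (h : ∀ j, ExtVanish N (Y j)) :
    ExtVanish N (ModuleCat.of A (DirectSum ι fun j => Y j)) :=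
  extVanish_iff.2 fun n => subsingleton_abelianExt_directSum fun j => extVanish_iff.1 (h j) n

lemma ExtVanish.of_projective (N M : ModuleCat.{u} A) [Projective N] : ExtVanish N M :=
  extVanish_iff.2 fun n => Abelian.Ext.subsingleton_of_projective N M n

lemma InAddOf.extVanish {X : ModuleCat.{u} A → Prop} {N M : ModuleCat.{u} A}
    (hN : InAddOf X N) (hX : ∀ N', X N' → ExtVanish N' M) : ExtVanish N M := by
  obtain ⟨k, F, hF, s, r, hrs⟩ := hN
  let e : ModuleCat.of A (DirectSum (Fin k) fun i => F i) ≅ Limits.biproduct F :=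
    (DirectSum.linearEquivFunOnFintype A (Fin k) fun i => F i).toModuleIso ≪≫
      (ModuleCat.biproductIsoPi F).symm
  let ρ : Retract N (ModuleCat.of A (DirectSum (Fin k) fun i => F i)) :=
    ⟨ModuleCat.ofHom s, ModuleCat.ofHom r, ModuleCat.hom_ext hrs⟩
  refine extVanish_iff.2 fun n => ?_
  have (i : Fin k) := extVanish_iff.1 (hX _ (hF i)) n
  have : Subsingleton (Abelian.Ext.{u} (Limits.biproduct F) M (n + 1)) :=
    (Abelian.Ext.biproductAddEquiv (Limits.biproduct.isBilimit F) M (n + 1)).subsingleton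
  exact subsingleton_abelianExt_of_retract (ρ.trans (Retract.ofIso e))

namespace ShortExact

variable {M₁ M₂ M₃ : ModuleCat.{u} A} {f : M₁ →ₗ[A] M₂} {g : M₂ →ₗ[A] M₃}

lemma shortComplex_shortExact (h : ShortExact f g) :
    (ModuleCat.shortComplexOfCompEqZero f g h.2.1.linearMap_comp_eq_zero).ShortExact :=
  ModuleCat.shortComplex_shortExact _ h.2.1 h.1 h.2.2

lemma ker_subtype (hg : Function.Surjective g) :
    ShortExact (M₁ := ModuleCat.of A (LinearMap.ker g)) (LinearMap.ker g).subtype g :=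
  ⟨Subtype.val_injective, LinearMap.exact_subtype_ker_map g, hg⟩

lemma codRestrict_ker {M₄ : ModuleCat.{u} A} {d : M₃ →ₗ[A] M₄} (hf : Function.Injective f)
    (hfg : Function.Exact f g) (hgd : Function.Exact g d) :
    ShortExact (M₃ := ModuleCat.of A (LinearMap.ker d)) f
      (g.codRestrict (LinearMap.ker d) hgd.apply_apply_eq_zero) := by
  refine ⟨hf, fun y => Subtype.ext_iff.trans (hfg y), ?_⟩
  rintro ⟨y, hy⟩
  obtain ⟨z, rfl⟩ := (hgd y).1 hy
  exact ⟨z, rfl⟩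

lemma extVanish_from_left {M : ModuleCat.{u} A} (h : ShortExact f g) (h₂ : ExtVanish M₂ M)
    (h₃ : ExtVanish M₃ M) : ExtVanish M₁ M :=
  extVanish_iff.2 fun n =>
    have := extVanish_iff.1 h₂ n
    have := extVanish_iff.1 h₃ (n + 1)
    subsingleton_abelianExt_from_X₁_of_X₂_of_X₃ h.shortComplex_shortExact

lemma exists_extension {M : ModuleCat.{u} A} (h : ShortExact f g) (h₃ : ExtVanish M₃ M)
    (φ : M₁ →ₗ[A] M) : ∃ ψ : M₂ →ₗ[A] M, ψ ∘ₗ f = φ := by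
  have := extVanish_iff.1 h₃ 0
  obtain ⟨ψ, hψ⟩ := exists_f_comp_eq_of_subsingleton_abelianExt h.shortComplex_shortExact
    (ModuleCat.ofHom φ)
  exact ⟨ψ.hom, congrArg ModuleCat.Hom.hom hψ⟩

lemma extVanish_to_left_of_lift {T : ModuleCat.{u} A} (h : ShortExact f g) (h₂ : ExtVanish T M₂)
    (h₃ : ExtVanish T M₃) (hlift : ∀ φ : T →ₗ[A] M₃, ∃ ψ : T →ₗ[A] M₂, g ∘ₗ ψ = φ) :
    ExtVanish T M₁ := by
  have hS := h.shortComplex_shortExact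
  refine extVanish_iff.2 fun n => ?_
  have := extVanish_iff.1 h₂ n
  cases n with
  | zero =>
    refine subsingleton_abelianExt_one_to_X₁_of_lift hS fun φ => ?_
    obtain ⟨ψ, hψ⟩ := hlift φ.hom
    exact ⟨ModuleCat.ofHom ψ, ModuleCat.hom_ext hψ⟩
  | succ n =>
    have := extVanish_iff.1 h₃ n
    exact subsingleton_abelianExt_to_X₁_of_X₂_of_X₃ hS

end ShortExact

lemma extVanish_ker_of_exact {M : ModuleCat.{u} A} {C : ℕ → ModuleCat.{u} A}
    {d : ∀ i, C i →ₗ[A] C (i + 1)} (hd : ∀ i, Function.Exact (d i) (d (i + 1)))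
    (hC : ∀ i, ExtVanish (C i) M) {m : ℕ} (hm : ∀ i, m ≤ i → Subsingleton (C i)) (i : ℕ) :
    ExtVanish (ModuleCat.of A (LinearMap.ker (d i))) M := by
  obtain ⟨k, hk⟩ : ∃ k, m ≤ i + k := ⟨m, by lia⟩
  induction k generalizing i with
  | zero =>
    have := hm i hk
    have : Projective (ModuleCat.of A (LinearMap.ker (d i))) :=
      (IsProjective.iff_projective _).1 inferInstance
    exact .of_projective _ _
  | succ k ih =>
    have hS := ShortExact.codRestrict_ker (M₁ := ModuleCat.of A (LinearMap.ker (d i)))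
      Subtype.val_injective (LinearMap.exact_subtype_ker_map (d i)) (hd i)
    exact hS.extVanish_from_left (hC i) (ih (i + 1) (by lia))

lemma InAdd.directSum (T : ModuleCat.{u} A) (ι : Type u) :
    InAdd T (ModuleCat.of A (DirectSum ι fun _ => T)) :=
  ⟨ι, LinearMap.id, LinearMap.id, rfl⟩

lemma InAdd.self (T : ModuleCat.{u} A) : InAdd T T :=
  ⟨PUnit, DirectSum.lof A PUnit (fun _ => T) ⟨⟩, DirectSum.component A PUnit (fun _ => T) ⟨⟩,
    DirectSum.component_comp_lof_same ..⟩

lemma InAddOf.inAdd {T M : ModuleCat.{u} A} (hM : InAddOf (fun X => X = T) M) : InAdd T M := by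
  obtain ⟨k, F, hF, s, r, hrs⟩ := hM
  obtain rfl : F = fun _ => T := funext hF
  let e := DirectSum.lequivCongrLeft A (M := fun _ : Fin k => T) Equiv.ulift.{u}.symm
  refine ⟨ULift (Fin k), e ∘ₗ s, r ∘ₗ e.symm, ?_⟩
  ext x
  simpa using LinearMap.congr_fun hrs x

open Classical in
/-- The evaluation map `T^(Hom(T, M)) → M`, whose component at `φ` is `φ` itself. -/
noncomputable def evalSum (T M : ModuleCat.{u} A) :
    ModuleCat.of A (DirectSum (T →ₗ[A] M) fun _ => T) →ₗ[A] M :=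
  DirectSum.toModule A (T →ₗ[A] M) M id

lemma evalSum_isRightApprox (T M : ModuleCat.{u} A) : IsRightApprox (InAdd T) (evalSum T M) := by
  classical
  refine ⟨.directSum T _, fun Y ⟨ι, s, r, hrs⟩ g => ?_⟩
  let l : DirectSum ι (fun _ => T) →ₗ[A] DirectSum (T →ₗ[A] M) fun _ => T :=
    DirectSum.toModule A ι _ fun j =>
      DirectSum.lof A (T →ₗ[A] M) (fun _ => T) (g ∘ₗ r ∘ₗ DirectSum.lof A ι (fun _ => T) j)
  have hl : evalSum T M ∘ₗ l = g ∘ₗ r := by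
    ext j t
    simp [l, evalSum]
  refine ⟨l ∘ₗ s, ?_⟩
  rw [← LinearMap.comp_assoc, hl, LinearMap.comp_assoc, hrs, LinearMap.comp_id]

namespace HasAddCoresolution

variable {T M : ModuleCat.{u} A}

lemma exists_linearMap_apply_eq (hT : HasAddCoresolution T (ModuleCat.of A A))
    (hM : ExtVanish T M) (x : M) :
    ∃ (C : ModuleCat.{u} A) (ψ : C →ₗ[A] M) (c : C), InAdd T C ∧ ψ c = x := by
  obtain ⟨C, d, f, hf, hfd, hd, hC, m, hm⟩ := hT
  have hCM (i : ℕ) : ExtVanish (C i) M := (hC i).extVanish fun _ hN => hN ▸ hM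
  obtain ⟨ψ, hψ⟩ := (ShortExact.codRestrict_ker hf hfd (hd 0)).exists_extension
    (extVanish_ker_of_exact hd hCM hm 1) (LinearMap.toSpanSingleton A M x)
  refine ⟨C 0, ψ, f (1 : A), (hC 0).inAdd, ?_⟩
  calc ψ (f (1 : A)) = (1 : A) • x := LinearMap.congr_fun hψ (1 : A)
    _ = x := one_smul A x

lemma surjective_of_isRightApprox (hT : HasAddCoresolution T (ModuleCat.of A A))
    (hM : ExtVanish T M) {T₀ : ModuleCat.{u} A} {p : T₀ →ₗ[A] M}
    (hp : IsRightApprox (InAdd T) p) : Function.Surjective p := by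
  intro x
  obtain ⟨C, ψ, c, hC, rfl⟩ := hT.exists_linearMap_apply_eq hM x
  obtain ⟨l, rfl⟩ := hp.2 C hC ψ
  exact ⟨l c, rfl⟩

lemma exists_shortExact (hT : HasAddCoresolution T (ModuleCat.of A A))
    (hTT : ∀ ι : Type u, ExtVanish T (ModuleCat.of A (DirectSum ι fun _ => T)))
    (hM : ExtVanish T M) :
    ∃ (K T₀ : ModuleCat.{u} A) (s : K →ₗ[A] T₀) (p : T₀ →ₗ[A] M),
      InAdd T T₀ ∧ ExtVanish T K ∧ ShortExact s p := by
  have hp := evalSum_isRightApprox T M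
  have hS := ShortExact.ker_subtype (hT.surjective_of_isRightApprox hM hp)
  exact ⟨_, _, _, _, hp.1, hS.extVanish_to_left_of_lift (hTT _) hM (hp.2 T (.self T)), hS⟩

end HasAddCoresolution

theorem stmt_6_general {T : ModuleCat.{u} A}
    (hTT : ∀ ι : Type u, ExtVanish T (ModuleCat.of A (DirectSum ι fun _ => T)))
    (hT : HasAddCoresolution T (ModuleCat.of A A)) {M : ModuleCat.{u} A} (hM : ExtVanish T M) :
    ∃ K : ℕ → ModuleCat.{u} A, K 0 = M ∧
      ∀ i, ∃ (Ti : ModuleCat.{u} A) (s : K (i + 1) →ₗ[A] Ti) (p : Ti →ₗ[A] K i),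
        InAdd T Ti ∧ ExtVanish T (K (i + 1)) ∧ ShortExact s p := by
  choose K T₀ s p hT₀ hK hS using
    fun N : {N : ModuleCat.{u} A // ExtVanish T N} => hT.exists_shortExact hTT N.2
  let L : ℕ → {N : ModuleCat.{u} A // ExtVanish T N} :=
    fun i => Nat.rec ⟨M, hM⟩ (fun _ N => ⟨K N, hK N⟩) i
  exact ⟨fun i => (L i).1, rfl, fun i => ⟨T₀ (L i), s (L i), p (L i), hT₀ _, hK _, hS _⟩⟩

end Modules

/-- For a tilting module `T` and `M ∈ T^⊥` there is, for every `n ≥ 1`, an exact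
sequence `0 → K_{n-1} → T_{n-1} → ⋯ → T_0 → M → 0` with all `T_i ∈ Add T` and all
kernels in `T^⊥` (encoded as a chain of short exact sequences). -/
theorem stmt_6 (Λ : Type u) [Ring Λ] (R : Type u) [CommRing R] [IsArtinianRing R]
    [Algebra R Λ] [Module.Finite R Λ]
    (T : ModuleCat.{u} Λᵐᵒᵖ) (hT : IsTilting T)
    (M : ModuleCat.{u} Λᵐᵒᵖ) (hM : ExtVanish T M) (n : ℕ) (hn : 1 ≤ n) :
    ∃ K : ℕ → ModuleCat.{u} Λᵐᵒᵖ, K 0 = M ∧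
      ∀ i < n, ∃ (Ti : ModuleCat.{u} Λᵐᵒᵖ)
        (s : K (i + 1) →ₗ[Λᵐᵒᵖ] Ti) (p : Ti →ₗ[Λᵐᵒᵖ] K i),
        InAdd T Ti ∧ ExtVanish T (K (i + 1)) ∧ ShortExact s p := by
  obtain ⟨_, -, hTT, hres⟩ := hT
  have : IsNoetherianRing Λᵐᵒᵖ := isNoetherian_of_tower R inferInstance
  obtain ⟨K, hK₀, hK⟩ := stmt_6_general (fun _ => .directSum_right fun _ => hTT) hres hM
  exact ⟨K, hK₀, fun i _ => hK i⟩
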